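/- For every even integer L ≥ 18: M_S(L,3) ≤ L/8 if L ≡ 0 (mod 8); M_S(L,3) ≤ (L−4)/8 if L ≡ 4 (mod 8); M_S(L,3) ≤ (L+2)/8 if L ≡ 6 (mod 24); M_S(L,3) ≤ (L−2)/8 if L ≡ 2, 10, or 18 (mod 24); and M_S(L,3) ≤ (L−6)/8 if L ≡ 14 or 22 (mod 24). -/

import Mathlib

open Finset

/-- The set of differences of a codeword `I ⊆ ℤ_L`. -/
def dset {L : ℕ} (I : Finset (ZMod L)) : Finset (ZMod L) :=
  (I ×ˢ I).image fun p => p.1 - p.2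

/-- The set of nonzero differences. -/
def dstar {L : ℕ} (I : Finset (ZMod L)) : Finset (ZMod L) := dset I \ {0}

/-- The set of shifted nonzero differences `d⁺(I) = d*(I) ∪ (d*(I)+1)`. -/
def dplus {L : ℕ} (I : Finset (ZMod L)) : Finset (ZMod L) :=
  dstar I ∪ (dstar I).image (· + 1)

/-- A strongly conflict-avoiding code of length `L` and weight `ω`. -/
def IsSCAC (L ω : ℕ) (C : Finset (Finset (ZMod L))) : Prop :=
  (∀ I ∈ C, I.card = ω) ∧
  (∀ I ∈ C, (1 : ZMod L) ∉ dstar I ∧ (-1 : ZMod L) ∉ dstar I) ∧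
  ∀ I ∈ C, ∀ J ∈ C, I ≠ J → Disjoint (dplus I) (dplus J)

/-- `M_S(L,ω)`: the maximum size of an SCAC of length `L` and weight `ω`. -/
noncomputable def MS (L ω : ℕ) : ℕ :=
  sSup {n | ∃ C : Finset (Finset (ZMod L)), IsSCAC L ω C ∧ C.card = n}

/-!
Identify `ZMod L` with `{0, …, L - 1}`. The sets `d⁺(I)` of a code are disjoint subsets of
`{2, …, L - 1}`, so the point is to bound `|d⁺(I)|` from below. Let `X ≤ Y ≤ Z` be the gaps between
the points of a codeword `I` on the circle: `X + Y + Z = L` and `d*(I) = {±X, ±Y, ±Z}`. For even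
`L`, `|d⁺(I)| ≥ 8` except when two gaps agree and

* all three gaps are `L / 3`, where `|d⁺(I)| ≥ 4`, or
* the repeated gap is `(L ± 1) / 3`, where `|d⁺(I)| ≥ 6`, or
* the repeated gap is `L / 4`, where `|d⁺(I)| ≥ 6`.

The exceptions contain the integer nearest to `L / 3`, respectively `L / 4`, and each of these lies
in `d*(I)` for at most one `I`. Counting gives every bound but the one for `L ≡ 12 (mod 24)`. There,
equality in the count would force the union `D` of all `d*(I)` to contain the odd number `L / 4` and
to have no two consecutive elements, while `D ∪ (D + 1) = {2, …, L - 1}`. As `1 ∉ D`, the last two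
properties make all elements of `D` even, a contradiction.
-/

theorem length_le_card_of_nodup {α : Type*} {s : Finset α} {l : List α}
    (hl : l.Nodup) (hs : ∀ a ∈ l, a ∈ s) : l.length ≤ #s := by
  classical
  rw [← List.toFinset_card_of_nodup hl]
  exact card_le_card fun a ha => hs a (List.mem_toFinset.mp ha)

theorem exists_le_le_of_swap {α : Type*} [LinearOrder α] {P : α → α → α → Prop}
    (swap_left : ∀ x y z, P x y z → P y x z) (swap_right : ∀ x y z, P x y z → P x z y)
    {x y z : α} (h : P x y z) : ∃ x y z, x ≤ y ∧ y ≤ z ∧ P x y z := by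
  rcases le_total x y with hxy | hxy <;> rcases le_total y z with hyz | hyz <;>
    rcases le_total x z with hxz | hxz <;> grind

section Thicken

/-- The set `S ∪ (S + 1)` of natural numbers; `thicken` turns `d*(I)` into `d⁺(I)`, see
`image_val_dplus`. -/
def thicken (S : Finset ℕ) : Finset ℕ := S ∪ S.image (· + 1)

variable {S : Finset ℕ} {n : ℕ}

theorem mem_thicken_of_mem (h : n ∈ S) : n ∈ thicken S := mem_union_left _ h

theorem add_one_mem_thicken_of_mem (h : n ∈ S) : n + 1 ∈ thicken S :=
  mem_union_right _ (mem_image_of_mem _ h)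

theorem add_one_mem_thicken : n + 1 ∈ thicken S ↔ n + 1 ∈ S ∨ n ∈ S := by
  simp [thicken]

theorem thicken_biUnion {ι : Type*} (C : Finset ι) (S : ι → Finset ℕ) :
    thicken (C.biUnion S) = C.biUnion fun i => thicken (S i) := by
  ext n
  simp only [thicken, mem_union, mem_image, mem_biUnion]
  grind

theorem notMem_of_odd_of_Ico_subset_thicken {L : ℕ} (h_one : 1 ∉ S)
    (h_consec : ∀ n ∈ S, n + 1 ∉ S) (h_cover : Ico 2 L ⊆ thicken S) (hn : Odd n) (hnL : n < L) :
    n ∉ S := by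
  obtain ⟨k, rfl⟩ := hn
  induction k with
  | zero => exact h_one
  | succ k ih =>
    have h_prev : 2 * k + 1 ∉ S := ih (by omega)
    have h_mem : 2 * k + 1 + 1 ∈ thicken S := h_cover (mem_Ico.mpr (by omega))
    exact h_consec _ ((add_one_mem_thicken.mp h_mem).resolve_right h_prev)

end Thicken

section Gaps

/-- The gaps, in increasing order, between three points on a circle of length `L`, no two of them
neighbours. -/
structure IsGapTriple (L X Y Z : ℕ) : Prop where
  sum_eq : X + Y + Z = L
  two_le : 2 ≤ X
  le_mid : X ≤ Y
  mid_le : Y ≤ Z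

/-- The residues `±X, ±Y, ±Z` modulo `L`, that is, the differences of a codeword with gaps
`X, Y, Z`. The representatives are the intended ones for `0 < X, Y, Z < L`. -/
def gapDifferences (L X Y Z : ℕ) : Finset ℕ := {X, Y, Z, L - X, L - Y, L - Z}

theorem mem_gapDifferences {L X Y Z n : ℕ} : n ∈ gapDifferences L X Y Z ↔
    n = X ∨ n = Y ∨ n = Z ∨ n = L - X ∨ n = L - Y ∨ n = L - Z := by
  simp only [gapDifferences, mem_insert, mem_singleton]

theorem gapDifferences_swap_left (L X Y Z : ℕ) :
    gapDifferences L X Y Z = gapDifferences L Y X Z := by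
  ext n
  simp only [mem_gapDifferences]
  tauto

theorem gapDifferences_swap_right (L X Y Z : ℕ) :
    gapDifferences L X Y Z = gapDifferences L X Z Y := by
  ext n
  simp only [mem_gapDifferences]
  tauto

theorem gapDifferences_sub {L X Y Z : ℕ} (hX : X ≤ L) (hY : Y ≤ L) (hZ : Z ≤ L) :
    gapDifferences L (L - X) (L - Y) (L - Z) = gapDifferences L X Y Z := by
  ext n
  simp only [mem_gapDifferences]
  omega

section Isosceles

variable {L X Z : ℕ}

theorem four_le_card_thicken_of_equilateral (hX : 2 ≤ X) (hsum : 3 * X = L) :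
    4 ≤ #(thicken (gapDifferences L X X X)) := by
  refine length_le_card_of_nodup (l := [X, X + 1, L - X, L - X + 1]) ?_ ?_
  · simp only [List.nodup_cons, List.mem_cons, List.not_mem_nil, List.nodup_nil, or_false,
      not_false_eq_true, and_true]
    omega
  · simp [thicken, gapDifferences]

theorem six_le_card_thicken_of_quarter (hX : 2 ≤ X) (hsum : X + X + Z = L) (hquarter : 4 * X = L) :
    6 ≤ #(thicken (gapDifferences L X X Z)) := by
  refine length_le_card_of_nodup (l := [X, X + 1, Z, Z + 1, L - X, L - X + 1]) ?_ ?_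
  · simp only [List.nodup_cons, List.mem_cons, List.not_mem_nil, List.nodup_nil, or_false,
      not_false_eq_true, and_true]
    omega
  · simp [thicken, gapDifferences]

theorem six_le_card_thicken_of_third (hL : Even L) (hX : 2 ≤ X) (hsum : X + X + Z = L)
    (hthird : X = (L + 1) / 3) (hXZ : X ≠ Z) :
    6 ≤ #(thicken (gapDifferences L X X Z)) := by
  rw [Nat.even_iff] at hL
  obtain hXZ | hXZ : Z = X + 1 ∨ X = Z + 1 := by omega
  · refine length_le_card_of_nodup (l := [X, X + 1, Z + 1, L - Z, L - X, L - X + 1]) ?_ ?_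
    · simp only [List.nodup_cons, List.mem_cons, List.not_mem_nil, List.nodup_nil, or_false,
        not_false_eq_true, and_true]
      omega
    · simp [thicken, gapDifferences]
  · refine length_le_card_of_nodup (l := [Z, X, X + 1, L - X, L - Z, L - Z + 1]) ?_ ?_
    · simp only [List.nodup_cons, List.mem_cons, List.not_mem_nil, List.nodup_nil, or_false,
        not_false_eq_true, and_true]
      omega
    · simp [thicken, gapDifferences]

theorem eight_le_card_thicken_of_isosceles (hL : Even L) (hX : 2 ≤ X) (hZ : 2 ≤ Z)
    (hsum : X + X + Z = L) (hthird : X ≠ (L + 1) / 3) (hquarter : 4 * X ≠ L) :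
    8 ≤ #(thicken (gapDifferences L X X Z)) := by
  rw [Nat.even_iff] at hL
  refine length_le_card_of_nodup
    (l := [X, X + 1, Z, Z + 1, L - X, L - X + 1, L - Z, L - Z + 1]) ?_ ?_
  · simp only [List.nodup_cons, List.mem_cons, List.not_mem_nil, List.nodup_nil, or_false,
      not_false_eq_true, and_true]
    omega
  · simp [thicken, gapDifferences]

end Isosceles

namespace IsGapTriple

variable {L X Y Z : ℕ}

theorem eight_le_card_thicken (h : IsGapTriple L X Y Z) (hL : Even L) (hXY : X < Y) (hYZ : Y < Z) :
    8 ≤ #(thicken (gapDifferences L X Y Z)) := by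
  obtain ⟨hsum, hX, -, -⟩ := h
  rw [Nat.even_iff] at hL
  by_cases hhalf : 2 * Z = L
  · refine length_le_card_of_nodup
      (l := [X, Y, Y + 1, Z, Z + 1, L - Y, L - X, L - X + 1]) ?_ ?_
    · simp only [List.nodup_cons, List.mem_cons, List.not_mem_nil, List.nodup_nil, or_false,
        not_false_eq_true, and_true]
      omega
    · simp [thicken, gapDifferences]
  · refine length_le_card_of_nodup
      (l := [X, Y, Z, Z + 1, L - X, L - Y, L - Z, L - X + 1]) ?_ ?_
    · simp only [List.nodup_cons, List.mem_cons, List.not_mem_nil, List.nodup_nil, or_false,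
        not_false_eq_true, and_true]
      omega
    · simp [thicken, gapDifferences]

theorem eq_add_one_or_eq_add_one (h : IsGapTriple L X Y Z) (hL : Even L) {n : ℕ}
    (hn : n ∈ gapDifferences L X Y Z) (hn' : n + 1 ∈ gapDifferences L X Y Z) :
    Y = X + 1 ∨ Z = Y + 1 := by
  obtain ⟨hsum, hX, hXY, hYZ⟩ := h
  rw [Nat.even_iff] at hL
  rw [mem_gapDifferences] at hn hn'
  omega

theorem nine_le_card_thicken (h : IsGapTriple L X Y Z) (hL : 12 ∣ L)
    (hconsec : Y = X + 1 ∨ Z = Y + 1) (hthird : 3 * Y ≠ L) :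
    9 ≤ #(thicken (gapDifferences L X Y Z)) := by
  obtain ⟨hsum, hX, hXY, hYZ⟩ := h
  rcases hconsec with hconsec | hconsec
  · refine length_le_card_of_nodup
      (l := [X, Y, Y + 1, L - Y, L - X, L - X + 1, Z, Z + 1, L - Z]) ?_ ?_
    · simp only [List.nodup_cons, List.mem_cons, List.not_mem_nil, List.nodup_nil, or_false,
        not_false_eq_true, and_true]
      omega
    · simp [thicken, gapDifferences]
  · refine length_le_card_of_nodup
      (l := [Y, Z, Z + 1, L - Z, L - Y, L - Y + 1, X, X + 1, L - X]) ?_ ?_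
    · simp only [List.nodup_cons, List.mem_cons, List.not_mem_nil, List.nodup_nil, or_false,
        not_false_eq_true, and_true]
      omega
    · simp [thicken, gapDifferences]

end IsGapTriple

end Gaps

section Padding

/-- What a set of differences containing the integer nearest to `L / 3` may lack to have eight
elements after thickening. -/
def thirdPadding (L : ℕ) : ℕ := if 3 ∣ L then 4 else 2

/-- What a set of differences containing `L / 4` may lack to have eight elements after
thickening. -/
def quarterPadding (L : ℕ) : ℕ := if 4 ∣ L then 2 else 0

/-- The size of `thicken S`, increased so that it is at least `8` for the differences of every
codeword of weight `3`. Here `(L + 1) / 3` is the integer nearest to `L / 3`. -/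
def paddedCard (L : ℕ) (S : Finset ℕ) : ℕ :=
  #(thicken S) + (if (L + 1) / 3 ∈ S then thirdPadding L else 0) +
    (if L / 4 ∈ S then quarterPadding L else 0)

theorem eight_le_paddedCard_of_isosceles {L X Z : ℕ} (hL : Even L) (hX : 2 ≤ X) (hZ : 2 ≤ Z)
    (hsum : X + X + Z = L) : 8 ≤ paddedCard L (gapDifferences L X X Z) := by
  have hX_mem : X ∈ gapDifferences L X X Z := by simp [gapDifferences]
  unfold paddedCard
  by_cases hXZ : X = Z
  · subst hXZ
    have := four_le_card_thicken_of_equilateral (L := L) hX (by omega)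
    rw [if_pos (by rwa [show (L + 1) / 3 = X by omega]), thirdPadding, if_pos (by omega)]
    omega
  by_cases hthird : X = (L + 1) / 3
  · have := six_le_card_thicken_of_third hL hX hsum hthird hXZ
    rw [if_pos (hthird ▸ hX_mem), thirdPadding]
    split_ifs <;> omega
  by_cases hquarter : 4 * X = L
  · have := six_le_card_thicken_of_quarter hX hsum hquarter
    rw [if_pos (c := L / 4 ∈ _) (by rwa [show L / 4 = X by omega]), quarterPadding,
      if_pos (c := 4 ∣ L) (by omega)]
    omega
  · have := eight_le_card_thicken_of_isosceles hL hX hZ hsum hthird hquarter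
    omega

variable {L X Y Z : ℕ}

theorem IsGapTriple.eight_le_paddedCard (h : IsGapTriple L X Y Z) (hL : Even L) :
    8 ≤ paddedCard L (gapDifferences L X Y Z) := by
  have ⟨hsum, hX, hXY, hYZ⟩ := h
  rcases hXY.eq_or_lt with rfl | hXY
  · exact eight_le_paddedCard_of_isosceles hL hX (by omega) hsum
  rcases hYZ.eq_or_lt with rfl | hYZ
  · rw [gapDifferences_swap_left, gapDifferences_swap_right]
    exact eight_le_paddedCard_of_isosceles hL (by omega) hX (by omega)
  · have := h.eight_le_card_thicken hL hXY hYZ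
    unfold paddedCard
    omega

theorem IsGapTriple.eight_lt_paddedCard (h : IsGapTriple L X Y Z) (hL : 12 ∣ L) {n : ℕ}
    (hn : n ∈ gapDifferences L X Y Z) (hn' : n + 1 ∈ gapDifferences L X Y Z) :
    8 < paddedCard L (gapDifferences L X Y Z) := by
  have hL_even : Even L := Nat.even_iff.mpr (by omega)
  have hconsec := h.eq_add_one_or_eq_add_one hL_even hn hn'
  unfold paddedCard
  by_cases hthird : 3 * Y = L
  · have hsum := h.sum_eq
    have := h.eight_le_card_thicken hL_even (by omega) (by omega)
    rw [if_pos (by rw [mem_gapDifferences]; omega), thirdPadding, if_pos (by omega)]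
    omega
  · have := h.nine_le_card_thicken hL hconsec hthird
    omega

theorem sum_ite_mem_of_pairwiseDisjoint {ι α M : Type*} [DecidableEq α] [AddCommMonoid M]
    {C : Finset ι} {S : ι → Finset α} (hS : (C : Set ι).PairwiseDisjoint S) (a : α) (c : M) :
    ∑ i ∈ C, (if a ∈ S i then c else 0) = if a ∈ C.biUnion S then c else 0 := by
  simp only [← sum_ite_eq' _ a fun _ => c, sum_biUnion hS]

theorem sum_paddedCard {ι : Type*} {C : Finset ι} {S : ι → Finset ℕ} (L : ℕ)
    (hS : (C : Set ι).PairwiseDisjoint fun i => thicken (S i)) :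
    ∑ i ∈ C, paddedCard L (S i) = paddedCard L (C.biUnion S) := by
  have hS' : (C : Set ι).PairwiseDisjoint S := hS.mono fun i => subset_union_left
  simp only [paddedCard, sum_add_distrib, sum_ite_mem_of_pairwiseDisjoint hS', thicken_biUnion,
    card_biUnion hS]

end Padding

section Codewords

variable {L : ℕ} {I : Finset (ZMod L)}

theorem mem_dstar {a : ZMod L} : a ∈ dstar I ↔ (∃ x ∈ I, ∃ y ∈ I, x - y = a) ∧ a ≠ 0 := by
  simp [dstar, dset, and_assoc]

theorem neg_mem_dstar {a : ZMod L} (ha : a ∈ dstar I) : -a ∈ dstar I := by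
  obtain ⟨⟨x, hx, y, hy, rfl⟩, hne⟩ := mem_dstar.mp ha
  exact mem_dstar.mpr ⟨⟨y, hy, x, hx, (neg_sub x y).symm⟩, neg_ne_zero.mpr hne⟩

theorem dstar_triple {p q r : ZMod L} (hpq : p ≠ q) (hqr : q ≠ r) (hrp : r ≠ p) :
    dstar {p, q, r} = {p - q, q - r, r - p, -(p - q), -(q - r), -(r - p)} := by
  ext a
  simp only [mem_dstar, mem_insert, mem_singleton, exists_eq_or_imp, exists_eq_left, neg_sub]
  grind

/-- The nonzero differences of a codeword, as natural numbers smaller than `L`. -/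
def diffVals (I : Finset (ZMod L)) : Finset ℕ := (dstar I).image ZMod.val

variable [NeZero L]

theorem mem_Ico_of_mem_diffVals (hone : 1 ∉ dstar I) {n : ℕ} (hn : n ∈ diffVals I) :
    n ∈ Ico 2 (L - 1) := by
  obtain ⟨a, ha, rfl⟩ := mem_image.mp hn
  have hlt : a.val < L := a.val_lt
  have hcast : (a.val : ZMod L) = a := ZMod.natCast_zmod_val a
  have hne_zero : a.val ≠ 0 := (ZMod.val_ne_zero a).mpr (mem_dstar.mp ha).2
  have hne_one : a.val ≠ 1 := fun h => by
    rw [h, Nat.cast_one] at hcast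
    exact hone (hcast ▸ ha)
  have hne_neg : a.val + 1 ≠ L := fun h => by
    have ha_add : a + 1 = 0 := by rw [← hcast, ← Nat.cast_add_one, h, ZMod.natCast_self]
    exact hone (neg_eq_of_add_eq_zero_right ha_add ▸ neg_mem_dstar ha)
  rw [mem_Ico]
  omega

theorem thicken_diffVals_subset (hone : 1 ∉ dstar I) :
    thicken (diffVals I) ⊆ Ico 2 L := by
  intro n hn
  simp only [thicken, mem_union, mem_image] at hn
  rw [mem_Ico]
  rcases hn with hn | ⟨m, hm, rfl⟩
  · have := mem_Ico.mp (mem_Ico_of_mem_diffVals hone hn)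
    omega
  · have := mem_Ico.mp (mem_Ico_of_mem_diffVals hone hm)
    omega

theorem image_val_dplus (hone : 1 ∉ dstar I) :
    (dplus I).image ZMod.val = thicken (diffVals I) := by
  simp only [dplus, thicken, diffVals, image_union, image_image]
  congr 1
  refine image_congr fun a ha => ?_
  have hlt := mem_Ico.mp (mem_Ico_of_mem_diffVals hone (mem_image_of_mem _ ha))
  have hcast : ((a.val + 1 : ℕ) : ZMod L) = a + 1 := by simp
  rw [Function.comp_apply, Function.comp_apply, ← hcast, ZMod.val_cast_of_lt (by omega)]

theorem diffVals_triple {p q r : ZMod L} (hpq : p ≠ q) (hqr : q ≠ r) (hrp : r ≠ p) :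
    diffVals {p, q, r} = gapDifferences L (p - q).val (q - r).val (r - p).val := by
  have := NeZero.mk (sub_ne_zero.mpr hpq)
  have := NeZero.mk (sub_ne_zero.mpr hqr)
  have := NeZero.mk (sub_ne_zero.mpr hrp)
  simp only [diffVals, dstar_triple hpq hqr hrp, image_insert, image_singleton,
    ZMod.val_neg_of_ne_zero, gapDifferences]

theorem val_add_val_add_val_of_add_eq_zero {x y z : ZMod L} (hx : x ≠ 0) (hsum : x + y + z = 0) :
    x.val + y.val + z.val = L ∨ x.val + y.val + z.val = 2 * L := by
  have hdvd : L ∣ x.val + y.val + z.val := by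
    rw [← ZMod.natCast_eq_zero_iff]
    simpa using hsum
  obtain ⟨k, hk⟩ := hdvd
  have hpos : 0 < x.val := ZMod.val_pos.mpr hx
  have hk_lt : k < 3 := by
    have := x.val_lt
    have := y.val_lt
    have := z.val_lt
    exact lt_of_mul_lt_mul_left (a := L) (by omega) (Nat.zero_le _)
  interval_cases k <;> omega

theorem exists_diffVals_eq_gapDifferences (hI : #I = 3) :
    ∃ X Y Z, X + Y + Z = L ∧ diffVals I = gapDifferences L X Y Z := by
  obtain ⟨p, q, r, hpq, hpr, hqr, rfl⟩ := card_eq_three.mp hI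
  have hvals := diffVals_triple hpq hqr hpr.symm
  have hsum : (p - q) + (q - r) + (r - p) = 0 := by ring
  rcases val_add_val_add_val_of_add_eq_zero (sub_ne_zero.mpr hpq) hsum with hval | hval
  · exact ⟨_, _, _, hval, hvals⟩
  · have hx := (p - q).val_lt
    have hy := (q - r).val_lt
    have hz := (r - p).val_lt
    exact ⟨_, _, _, by omega, hvals.trans (gapDifferences_sub hx.le hy.le hz.le).symm⟩

theorem exists_isGapTriple (hI : #I = 3) (hone : 1 ∉ dstar I) :
    ∃ X Y Z, IsGapTriple L X Y Z ∧ diffVals I = gapDifferences L X Y Z := by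
  obtain ⟨_, _, _, hgaps⟩ := exists_diffVals_eq_gapDifferences hI
  obtain ⟨X, Y, Z, hXY, hYZ, hsum, hvals⟩ := exists_le_le_of_swap
    (P := fun X Y Z => X + Y + Z = L ∧ diffVals I = gapDifferences L X Y Z)
    (fun X Y Z h => ⟨by omega, h.2.trans (gapDifferences_swap_left L X Y Z)⟩)
    (fun X Y Z h => ⟨by omega, h.2.trans (gapDifferences_swap_right L X Y Z)⟩) hgaps
  have hX : X ∈ diffVals I := hvals ▸ mem_gapDifferences.mpr (.inl rfl)
  have hX_two : 2 ≤ X := (mem_Ico.mp (mem_Ico_of_mem_diffVals hone hX)).1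
  exact ⟨X, Y, Z, ⟨hsum, hX_two, hXY, hYZ⟩, hvals⟩

end Codewords

namespace IsSCAC

variable {L ω : ℕ} [NeZero L] {C : Finset (Finset (ZMod L))}

theorem pairwiseDisjoint_thicken (hC : IsSCAC L ω C) :
    (C : Set (Finset (ZMod L))).PairwiseDisjoint fun I => thicken (diffVals I) := by
  intro I hI J hJ hIJ
  simpa only [Function.onFun, ← image_val_dplus (hC.2.1 I hI).1, ← image_val_dplus (hC.2.1 J hJ).1,
    disjoint_image (ZMod.val_injective L)] using hC.2.2 I hI J hJ hIJ

theorem thicken_biUnion_subset (hC : IsSCAC L ω C) : thicken (C.biUnion diffVals) ⊆ Ico 2 L := by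
  rw [thicken_biUnion, biUnion_subset]
  exact fun I hI => thicken_diffVals_subset (hC.2.1 I hI).1

theorem one_notMem_biUnion (hC : IsSCAC L ω C) : 1 ∉ C.biUnion diffVals := fun h => by
  simpa using hC.thicken_biUnion_subset (mem_thicken_of_mem h)

theorem card_thicken_biUnion_le (hC : IsSCAC L ω C) :
    #(thicken (C.biUnion diffVals)) ≤ L - 2 := by
  simpa using card_le_card hC.thicken_biUnion_subset

theorem eight_le_paddedCard (hC : IsSCAC L 3 C) (hL : Even L) {I : Finset (ZMod L)} (hI : I ∈ C) :
    8 ≤ paddedCard L (diffVals I) := by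
  obtain ⟨X, Y, Z, hgaps, hvals⟩ := exists_isGapTriple (hC.1 I hI) (hC.2.1 I hI).1
  exact hvals ▸ hgaps.eight_le_paddedCard hL

theorem eight_lt_paddedCard (hC : IsSCAC L 3 C) (hL : 12 ∣ L) {I : Finset (ZMod L)} (hI : I ∈ C)
    {n : ℕ} (hn : n ∈ diffVals I) (hn' : n + 1 ∈ diffVals I) :
    8 < paddedCard L (diffVals I) := by
  obtain ⟨X, Y, Z, hgaps, hvals⟩ := exists_isGapTriple (hC.1 I hI) (hC.2.1 I hI).1
  rw [hvals] at hn hn' ⊢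
  exact hgaps.eight_lt_paddedCard hL hn hn'

theorem eight_mul_card_le_paddedCard (hC : IsSCAC L 3 C) (hL : Even L) :
    8 * #C ≤ paddedCard L (C.biUnion diffVals) := by
  rw [← sum_paddedCard L hC.pairwiseDisjoint_thicken, mul_comm, ← smul_eq_mul]
  exact card_nsmul_le_sum C _ 8 fun I hI => hC.eight_le_paddedCard hL hI

theorem eight_mul_card_lt_paddedCard (hC : IsSCAC L 3 C) (hL : 12 ∣ L) {n : ℕ}
    (hn : n ∈ C.biUnion diffVals) (hn' : n + 1 ∈ C.biUnion diffVals) :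
    8 * #C < paddedCard L (C.biUnion diffVals) := by
  obtain ⟨I, hI, hnI⟩ := mem_biUnion.mp hn
  obtain ⟨J, hJ, hnJ⟩ := mem_biUnion.mp hn'
  obtain rfl : I = J := hC.pairwiseDisjoint_thicken.elim_finset hI hJ (n + 1)
    (add_one_mem_thicken_of_mem hnI) (mem_thicken_of_mem hnJ)
  have hL' : Even L := even_iff_two_dvd.mpr (by omega)
  rw [← sum_paddedCard L hC.pairwiseDisjoint_thicken, mul_comm, ← smul_eq_mul, ← sum_const]
  exact sum_lt_sum (fun J hJ => hC.eight_le_paddedCard hL' hJ)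
    ⟨I, hI, hC.eight_lt_paddedCard hL hI hnI hnJ⟩

theorem eight_mul_card_le (hC : IsSCAC L 3 C) (hL : Even L) :
    8 * #C ≤ L - 2 + thirdPadding L + quarterPadding L :=
  calc 8 * #C ≤ paddedCard L (C.biUnion diffVals) := hC.eight_mul_card_le_paddedCard hL
    _ ≤ L - 2 + thirdPadding L + quarterPadding L := by
      unfold paddedCard
      gcongr
      · exact hC.card_thicken_biUnion_le
      · split_ifs <;> omega
      · split_ifs <;> omega

theorem eight_mul_card_lt (hC : IsSCAC L 3 C) (hL : L % 24 = 12) : 8 * #C < L + 4 := by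
  by_contra! hcard
  set D := C.biUnion diffVals
  have hpadded : paddedCard L D ≤ #(thicken D) + 4 + if L / 4 ∈ D then 2 else 0 := by
    simp only [paddedCard, thirdPadding, quarterPadding, if_pos (show 3 ∣ L by omega),
      if_pos (show 4 ∣ L by omega)]
    split_ifs <;> omega
  have hle : 8 * #C ≤ paddedCard L D :=
    hC.eight_mul_card_le_paddedCard (Nat.even_iff.mpr (by omega))
  have hcard_D : #(thicken D) ≤ L - 2 := hC.card_thicken_biUnion_le
  have hquarter : L / 4 ∈ D := by
    by_contra h
    rw [if_neg h] at hpadded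
    omega
  rw [if_pos hquarter] at hpadded
  have hcover : thicken D = Ico 2 L :=
    eq_of_subset_of_card_le hC.thicken_biUnion_subset (by rw [Nat.card_Ico]; omega)
  have hconsec : ∀ n ∈ D, n + 1 ∉ D := fun n hn hn' => by
    have hlt : 8 * #C < paddedCard L D := hC.eight_mul_card_lt_paddedCard (by omega) hn hn'
    omega
  exact notMem_of_odd_of_Ico_subset_thicken hC.one_notMem_biUnion hconsec hcover.ge
    (Nat.odd_iff.mpr (by omega)) (by omega) hquarter

end IsSCAC

theorem MS_le {L ω B : ℕ} (h : ∀ C : Finset (Finset (ZMod L)), IsSCAC L ω C → #C ≤ B) :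
    MS L ω ≤ B := by
  refine csSup_le ⟨0, ∅, by simp [IsSCAC], card_empty⟩ ?_
  rintro _ ⟨C, hC, rfl⟩
  exact h C hC

theorem MS_upper_even_general (L : ℕ) [NeZero L] :
    (L % 8 = 0 → MS L 3 ≤ L / 8) ∧
    (L % 8 = 4 → MS L 3 ≤ (L - 4) / 8) ∧
    (L % 24 = 6 → MS L 3 ≤ (L + 2) / 8) ∧
    (L % 24 = 2 ∨ L % 24 = 10 ∨ L % 24 = 18 → MS L 3 ≤ (L - 2) / 8) ∧
    (L % 24 = 14 ∨ L % 24 = 22 → MS L 3 ≤ (L - 6) / 8) := by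
  have hpos : 0 < L := NeZero.pos L
  refine ⟨?_, ?_, ?_, ?_, ?_⟩ <;>
  · refine fun hmod => MS_le fun C hC => ?_
    have hbound := hC.eight_mul_card_le (Nat.even_iff.mpr (by omega))
    have hbound_twelve := hC.eight_mul_card_lt
    unfold thirdPadding quarterPadding at hbound
    split_ifs at hbound <;> omega

theorem MS_upper_even (L : ℕ) (hL : 18 ≤ L) (hE : Even L) :
    (L % 8 = 0 → MS L 3 ≤ L / 8) ∧
    (L % 8 = 4 → MS L 3 ≤ (L - 4) / 8) ∧
    (L % 24 = 6 → MS L 3 ≤ (L + 2) / 8) ∧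
    (L % 24 = 2 ∨ L % 24 = 10 ∨ L % 24 = 18 → MS L 3 ≤ (L - 2) / 8) ∧
    (L % 24 = 14 ∨ L % 24 = 22 → MS L 3 ≤ (L - 6) / 8) :=
  have : NeZero L := ⟨by omega⟩
  MS_upper_even_general L
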